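/- The series ∑_{n=2}^∞ (H_n·log n)/n² converges and equals (π²/6)·(π²/8 − γ²/2 + log²(2π)) + π²·γ·log(A²/(2π)^{1/6}) − C·ζ(3) − ζ′(3) + (1/2)·ζ″(2) − 2π²·∫₀¹ x·log²Γ(x) dx, where H_n is the n-th harmonic number, A = e^{1/12 − ζ′(−1)} is the Glaisher–Kinkelin constant, C = log(2π) + γ, and ζ″(2) is the second derivative of the Riemann zeta function at 2. -/

import Mathlib

open Real

/-!
Write `L x = log (π / sin πx)`, which is `log Γ(x) + log Γ(1 - x)` by Euler's reflection formula.
Kummer's formula puts `γ + log 2πn` into the `n`-th sine coefficient of `log Γ`, while the `n`-th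
sine coefficient of `(x - 1/2) L` involves `log 2π + H_{n-1}`. Hence Parseval's identity for this
pair of functions produces `∑ H_n log n / n²`, up to sums known from `∑ H_{n-1} / n² = ζ(3)` and
the derivatives of `ζ`. The integral `∫₀¹ (x - 1/2) L log Γ` on the other side equals
`∫₀¹ (x - 1/2) log² Γ`, as one sees by averaging over `x ↦ 1 - x`, and `∫₀¹ log² Γ` is
found by Parseval's identity applied to `log Γ` itself. The functional equation of `ζ` finally
trades `ζ'(2)` for `ζ'(-1)`, that is, for the Glaisher–Kinkelin constant.
-/

section

open MeasureTheory Set Filter Topology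

section Fourier

/-- Square integrability on the unit interval, with `Ioc 0 1` as underlying set so that it matches
both interval integrals and Mathlib's Fourier series on an interval. -/
abbrev SqIntegrable (f : ℝ → ℝ) : Prop := MemLp f 2 (volume.restrict (Ioc (0 : ℝ) 1))

/-- The `n`-th cosine coefficient `∫₀¹ f(x) cos(2πnx) dx` of a function on the unit interval,
without the customary factor `2`. -/
noncomputable def cosCoeff (f : ℝ → ℝ) (n : ℤ) : ℝ :=
  ∫ x in (0 : ℝ)..1, f x * cos (2 * π * n * x)

/-- The `n`-th sine coefficient `∫₀¹ f(x) sin(2πnx) dx` of a function on the unit interval,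
without the customary factor `2`. -/
noncomputable def sinCoeff (f : ℝ → ℝ) (n : ℤ) : ℝ :=
  ∫ x in (0 : ℝ)..1, f x * sin (2 * π * n * x)

variable {f g : ℝ → ℝ}

theorem SqIntegrable.of_continuousOn (hf : ContinuousOn f (Icc 0 1)) : SqIntegrable f := by
  obtain ⟨C, hC⟩ := isCompact_Icc.exists_bound_of_continuousOn hf
  refine MemLp.of_bound ((hf.mono Ioc_subset_Icc_self).aestronglyMeasurable measurableSet_Ioc) C ?_
  filter_upwards [ae_restrict_mem measurableSet_Ioc] with x hx
  exact hC x (Ioc_subset_Icc_self hx)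

theorem SqIntegrable.intervalIntegrable (hf : SqIntegrable f) :
    IntervalIntegrable f volume 0 1 := by
  rw [intervalIntegrable_iff_integrableOn_Ioc_of_le zero_le_one]
  exact hf.integrable one_le_two

theorem SqIntegrable.intervalIntegrable_mul (hf : SqIntegrable f) (hg : SqIntegrable g) :
    IntervalIntegrable (fun x => f x * g x) volume 0 1 := by
  rw [intervalIntegrable_iff_integrableOn_Ioc_of_le zero_le_one]
  exact MemLp.integrable_mul hf hg

theorem SqIntegrable.intervalIntegrable_sq (hf : SqIntegrable f) :
    IntervalIntegrable (fun x => f x ^ 2) volume 0 1 := by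
  simpa only [sq] using hf.intervalIntegrable_mul hf

theorem SqIntegrable.continuousOn_mul (hf : ContinuousOn f (Icc 0 1)) (hg : SqIntegrable g) :
    SqIntegrable (fun x => f x * g x) := by
  obtain ⟨C, hC⟩ := isCompact_Icc.exists_bound_of_continuousOn hf
  refine MemLp.of_le_mul (c := C) hg
    (((hf.mono Ioc_subset_Icc_self).aestronglyMeasurable measurableSet_Ioc).mul hg.1) ?_
  filter_upwards [ae_restrict_mem measurableSet_Ioc] with x hx
  rw [norm_mul]
  gcongr
  exact hC x (Ioc_subset_Icc_self hx)

theorem SqIntegrable.congr_Ioo (hf : SqIntegrable f) (h : EqOn f g (Ioo 0 1)) :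
    SqIntegrable g := by
  rw [SqIntegrable, ← restrict_Ioo_eq_restrict_Ioc] at *
  refine (memLp_congr_ae ?_).mp hf
  filter_upwards [ae_restrict_mem measurableSet_Ioo] with x hx using h hx

theorem SqIntegrable.comp_one_sub (hf : SqIntegrable f) : SqIntegrable (fun x => f (1 - x)) := by
  rw [SqIntegrable, ← restrict_Ioo_eq_restrict_Ioc] at *
  have h := (volume.measurePreserving_sub_left (1 : ℝ)).restrict_preimage
    (measurableSet_Ioo (a := (0 : ℝ)) (b := 1))
  rw [show (fun x : ℝ => 1 - x) ⁻¹' Ioo 0 1 = Ioo 0 1 by simp] at h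
  exact hf.comp_measurePreserving h

theorem intervalIntegrable_mul_cos (hf : IntervalIntegrable f volume 0 1) (n : ℤ) :
    IntervalIntegrable (fun x => f x * cos (2 * π * n * x)) volume 0 1 :=
  hf.mul_continuousOn (by fun_prop)

theorem intervalIntegrable_mul_sin (hf : IntervalIntegrable f volume 0 1) (n : ℤ) :
    IntervalIntegrable (fun x => f x * sin (2 * π * n * x)) volume 0 1 :=
  hf.mul_continuousOn (by fun_prop)

theorem cosCoeff_add (hf : IntervalIntegrable f volume 0 1) (hg : IntervalIntegrable g volume 0 1)
    (n : ℤ) : cosCoeff (f + g) n = cosCoeff f n + cosCoeff g n := by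
  simp only [cosCoeff, Pi.add_apply, add_mul]
  exact intervalIntegral.integral_add (intervalIntegrable_mul_cos hf n)
    (intervalIntegrable_mul_cos hg n)

theorem cosCoeff_sub (hf : IntervalIntegrable f volume 0 1) (hg : IntervalIntegrable g volume 0 1)
    (n : ℤ) : cosCoeff (f - g) n = cosCoeff f n - cosCoeff g n := by
  simp only [cosCoeff, Pi.sub_apply, sub_mul]
  exact intervalIntegral.integral_sub (intervalIntegrable_mul_cos hf n)
    (intervalIntegrable_mul_cos hg n)

theorem sinCoeff_add (hf : IntervalIntegrable f volume 0 1) (hg : IntervalIntegrable g volume 0 1)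
    (n : ℤ) : sinCoeff (f + g) n = sinCoeff f n + sinCoeff g n := by
  simp only [sinCoeff, Pi.add_apply, add_mul]
  exact intervalIntegral.integral_add (intervalIntegrable_mul_sin hf n)
    (intervalIntegrable_mul_sin hg n)

theorem sinCoeff_sub (hf : IntervalIntegrable f volume 0 1) (hg : IntervalIntegrable g volume 0 1)
    (n : ℤ) : sinCoeff (f - g) n = sinCoeff f n - sinCoeff g n := by
  simp only [sinCoeff, Pi.sub_apply, sub_mul]
  exact intervalIntegral.integral_sub (intervalIntegrable_mul_sin hf n)
    (intervalIntegrable_mul_sin hg n)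

theorem sinCoeff_congr_Ioo (h : EqOn f g (Ioo 0 1)) (n : ℤ) : sinCoeff f n = sinCoeff g n :=
  intervalIntegral.integral_congr_Ioo_of_le zero_le_one fun x hx => by
    simp only [h hx]

theorem abs_sinCoeff_le {C : ℝ} (hf : ∀ x ∈ Ioc (0 : ℝ) 1, |f x| ≤ C) (n : ℤ) :
    |sinCoeff f n| ≤ C := by
  have h := intervalIntegral.norm_integral_le_of_norm_le_const (a := 0) (b := 1)
    (f := fun x => f x * sin (2 * π * n * x)) (C := C) fun x hx => by
      rw [uIoc_of_le zero_le_one] at hx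
      rw [norm_mul]
      exact (mul_le_of_le_one_right (norm_nonneg _) (abs_sin_le_one _)).trans (hf x hx)
  simpa [sinCoeff] using h

theorem intervalIntegrable_ofReal {μ : Measure ℝ} {a b : ℝ} (hf : IntervalIntegrable f μ a b) :
    IntervalIntegrable (fun x => (f x : ℂ)) μ a b :=
  ⟨hf.1.ofReal, hf.2.ofReal⟩

theorem fourierCoeffOn_ofReal (hf : IntervalIntegrable f volume 0 1) (n : ℤ) :
    fourierCoeffOn (zero_lt_one' ℝ) (fun x => (f x : ℂ)) n =
      cosCoeff f n - sinCoeff f n * Complex.I := by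
  have hfourier (x : ℝ) : fourier (-n) (x : AddCircle ((1 : ℝ) - 0)) * (f x : ℂ) =
      ((f x * cos (2 * π * n * x) : ℝ) : ℂ) -
        ((f x * sin (2 * π * n * x) : ℝ) : ℂ) * Complex.I := by
    have harg : 2 * π * Complex.I * ((-n : ℤ) : ℂ) * x / ((1 - 0 : ℝ) : ℂ) =
        -(2 * π * n * x : ℝ) * Complex.I := by
      push_cast
      ring
    rw [fourier_coe_apply, harg, Complex.exp_mul_I, Complex.cos_neg, Complex.sin_neg]
    push_cast
    ring
  rw [fourierCoeffOn_eq_integral]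
  simp only [sub_zero, div_one, one_smul, smul_eq_mul, cosCoeff, sinCoeff,
    ← intervalIntegral.integral_ofReal, ← intervalIntegral.integral_mul_const]
  rw [← intervalIntegral.integral_sub (intervalIntegrable_ofReal (intervalIntegrable_mul_cos hf n))
    ((intervalIntegrable_ofReal (intervalIntegrable_mul_sin hf n)).mul_const _)]
  exact intervalIntegral.integral_congr fun x _ => by simpa using hfourier x

theorem norm_fourierCoeffOn_ofReal_sq (hf : IntervalIntegrable f volume 0 1) (n : ℤ) :
    ‖fourierCoeffOn (zero_lt_one' ℝ) (fun x => (f x : ℂ)) n‖ ^ 2 =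
      cosCoeff f n ^ 2 + sinCoeff f n ^ 2 := by
  rw [fourierCoeffOn_ofReal hf, ← Complex.normSq_eq_norm_sq, Complex.normSq_apply]
  simp
  ring

theorem cosCoeff_neg (f : ℝ → ℝ) (n : ℤ) : cosCoeff f (-n) = cosCoeff f n := by
  simp [cosCoeff]

theorem sinCoeff_neg (f : ℝ → ℝ) (n : ℤ) : sinCoeff f (-n) = -sinCoeff f n := by
  simp [sinCoeff]

theorem cosCoeff_zero (f : ℝ → ℝ) : cosCoeff f 0 = ∫ x in (0 : ℝ)..1, f x := by
  simp [cosCoeff]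

theorem sinCoeff_zero (f : ℝ → ℝ) : sinCoeff f 0 = 0 := by
  simp [sinCoeff]

theorem hasSum_cosCoeff_sq_add_sinCoeff_sq (hf : SqIntegrable f) :
    HasSum (fun n : ℕ => 2 * (cosCoeff f (n + 1) ^ 2 + sinCoeff f (n + 1) ^ 2))
      ((∫ x in (0 : ℝ)..1, f x ^ 2) - (∫ x in (0 : ℝ)..1, f x) ^ 2) := by
  have h := hasSum_sq_fourierCoeffOn (zero_lt_one' ℝ) (f := fun x => (f x : ℂ)) hf.ofReal
  simp_rw [norm_fourierCoeffOn_ofReal_sq hf.intervalIntegrable] at h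
  convert! (hasSum_nat_add_iff' 1).mpr h.nat_add_neg using 1
  · ext n
    simp only [Nat.cast_add, Nat.cast_one, cosCoeff_neg, sinCoeff_neg]
    ring
  · simp [cosCoeff_zero, sinCoeff_zero]

theorem hasSum_cosCoeff_mul_add_sinCoeff_mul (hf : SqIntegrable f) (hg : SqIntegrable g) :
    HasSum (fun n : ℕ => 2 * (cosCoeff f (n + 1) * cosCoeff g (n + 1) +
        sinCoeff f (n + 1) * sinCoeff g (n + 1)))
      ((∫ x in (0 : ℝ)..1, f x * g x) -
        (∫ x in (0 : ℝ)..1, f x) * ∫ x in (0 : ℝ)..1, g x) := by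
  have hif := hf.intervalIntegrable
  have hig := hg.intervalIntegrable
  have hadd : SqIntegrable (f + g) := hf.add hg
  have hsub : SqIntegrable (f - g) := hf.sub hg
  have polarization : ∫ x in (0 : ℝ)..1, f x * g x =
      ((∫ x in (0 : ℝ)..1, (f + g) x ^ 2) - ∫ x in (0 : ℝ)..1, (f - g) x ^ 2) / 4 := by
    rw [← intervalIntegral.integral_sub hadd.intervalIntegrable_sq hsub.intervalIntegrable_sq,
      ← intervalIntegral.integral_div]
    refine intervalIntegral.integral_congr fun x _ => ?_
    simp only [Pi.add_apply, Pi.sub_apply]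
    ring
  convert! ((hasSum_cosCoeff_sq_add_sinCoeff_sq hadd).sub
    (hasSum_cosCoeff_sq_add_sinCoeff_sq hsub)).div_const 4 using 1
  · ext n
    rw [cosCoeff_add hif hig, cosCoeff_sub hif hig, sinCoeff_add hif hig, sinCoeff_sub hif hig]
    ring
  · rw [polarization]
    simp only [Pi.add_apply, Pi.sub_apply]
    rw [intervalIntegral.integral_add hif hig, intervalIntegral.integral_sub hif hig]
    ring

end Fourier

section Reflection

variable {f : ℝ → ℝ}

theorem sin_two_pi_mul_int_mul_one_sub (n : ℤ) (x : ℝ) :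
    sin (2 * π * n * (1 - x)) = -sin (2 * π * n * x) := by
  rw [← sin_int_mul_two_pi_sub (2 * π * n * x) n]
  ring_nf

theorem cos_two_pi_mul_int_mul_one_sub (n : ℤ) (x : ℝ) :
    cos (2 * π * n * (1 - x)) = cos (2 * π * n * x) := by
  rw [← cos_int_mul_two_pi_sub (2 * π * n * x) n]
  ring_nf

theorem integral_comp_one_sub (f : ℝ → ℝ) :
    ∫ x in (0 : ℝ)..1, f (1 - x) = ∫ x in (0 : ℝ)..1, f x := by
  simp [intervalIntegral.integral_comp_sub_left]

theorem integral_eq_zero_of_antisymm (hf : ∀ x, f (1 - x) = -f x) :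
    ∫ x in (0 : ℝ)..1, f x = 0 := by
  have h := integral_comp_one_sub f
  simp only [hf, intervalIntegral.integral_neg] at h
  linarith

theorem sinCoeff_eq_zero_of_symm (hf : ∀ x, f (1 - x) = f x) (n : ℤ) : sinCoeff f n = 0 :=
  integral_eq_zero_of_antisymm fun x => by rw [hf, sin_two_pi_mul_int_mul_one_sub, mul_neg]

theorem cosCoeff_eq_zero_of_antisymm (hf : ∀ x, f (1 - x) = -f x) (n : ℤ) : cosCoeff f n = 0 :=
  integral_eq_zero_of_antisymm fun x => by rw [hf, cos_two_pi_mul_int_mul_one_sub, neg_mul]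

theorem integral_eq_half_integral_add_comp_one_sub (hf : IntervalIntegrable f volume 0 1) :
    ∫ x in (0 : ℝ)..1, f x = (∫ x in (0 : ℝ)..1, (f x + f (1 - x))) / 2 := by
  have hf' : IntervalIntegrable (fun x => f (1 - x)) volume 0 1 := by
    simpa using (hf.comp_sub_left 1).symm
  rw [intervalIntegral.integral_add hf hf', integral_comp_one_sub]
  ring

end Reflection

section Bernoulli

theorem bernoulliFourierCoeff_eq_cosCoeff_sub_sinCoeff (k : ℕ) (n : ℤ) :
    bernoulliFourierCoeff k n =
      cosCoeff (bernoulliFun k) n - sinCoeff (bernoulliFun k) n * Complex.I :=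
  fourierCoeffOn_ofReal (intervalIntegrable_bernoulliFun k 0 1) n

theorem cosCoeff_one {n : ℤ} (hn : n ≠ 0) : cosCoeff (fun _ => 1) n = 0 := by
  have h := congrArg Complex.re (bernoulliFourierCoeff_eq_cosCoeff_sub_sinCoeff 0 n)
  rw [bernoulli_zero_fourier_coeff hn] at h
  simpa [funext bernoulliFun_zero] using h.symm

theorem sinCoeff_sub_half (n : ℤ) : sinCoeff (fun x => x - 1 / 2) n = -(1 / (2 * π * n)) := by
  have h := congrArg Complex.im (bernoulliFourierCoeff_eq_cosCoeff_sub_sinCoeff 1 n)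
  have hcoeff : bernoulliFourierCoeff 1 n = ((1 / (2 * π * n) : ℝ) : ℂ) * Complex.I := by
    rw [bernoulliFourierCoeff_eq one_ne_zero]
    push_cast
    field_simp
    norm_num
    ring
  rw [hcoeff, funext bernoulliFun_one] at h
  simp only [Complex.im_ofReal_mul, Complex.sub_im, Complex.ofReal_im,
    Complex.I_im] at h
  linarith

theorem cosCoeff_bernoulliFun_two (n : ℤ) :
    cosCoeff (bernoulliFun 2) n = 1 / (2 * π ^ 2 * n ^ 2) := by
  have h := congrArg Complex.re (bernoulliFourierCoeff_eq_cosCoeff_sub_sinCoeff 2 n)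
  have hcoeff : bernoulliFourierCoeff 2 n = ((1 / (2 * π ^ 2 * n ^ 2) : ℝ) : ℂ) := by
    rw [bernoulliFourierCoeff_eq two_ne_zero]
    push_cast
    simp only [mul_pow, Complex.I_sq]
    field_simp
    norm_num
  rw [hcoeff, Complex.ofReal_re] at h
  simpa using h.symm

end Bernoulli

section LogGamma

/-- The function `log (π / sin πx)`, which by Euler's reflection formula is
`log Γ(x) + log Γ(1 - x)` on `(0, 1)`. -/
noncomputable def logPiDivSin (x : ℝ) : ℝ := log (π / sin (π * x))

theorem sin_pi_mul_pos {x : ℝ} (hx : x ∈ Ioo (0 : ℝ) 1) : 0 < sin (π * x) :=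
  sin_pos_of_pos_of_lt_pi (mul_pos pi_pos hx.1) (mul_lt_of_lt_one_right pi_pos hx.2)

theorem logPiDivSin_one_sub (x : ℝ) : logPiDivSin (1 - x) = logPiDivSin x := by
  rw [logPiDivSin, logPiDivSin, mul_sub, mul_one, sin_pi_sub]

theorem log_Gamma_add_log_Gamma_one_sub {x : ℝ} (hx : x ∈ Ioo (0 : ℝ) 1) :
    log (Gamma x) + log (Gamma (1 - x)) = logPiDivSin x := by
  rw [← log_mul (Gamma_pos_of_pos hx.1).ne' (Gamma_pos_of_pos (sub_pos.mpr hx.2)).ne',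
    Gamma_mul_Gamma_one_sub, logPiDivSin]

theorem log_Gamma_add_one {x : ℝ} (hx : 0 < x) :
    log (Gamma (x + 1)) = log (Gamma x) + log x := by
  rw [Gamma_add_one hx.ne', log_mul hx.ne' (Gamma_pos_of_pos hx).ne', add_comm]

theorem continuousOn_log_Gamma : ContinuousOn (fun x => log (Gamma x)) (Ioi 0) :=
  convexOn_log_Gamma.continuousOn isOpen_Ioi

theorem sqIntegrable_log : SqIntegrable log := by
  rw [SqIntegrable, memLp_two_iff_integrable_sq measurable_log.aestronglyMeasurable]
  have hdom : IntegrableOn (fun x : ℝ => 16 * x ^ (-(1 / 2) : ℝ)) (Ioc 0 1) := by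
    rw [← intervalIntegrable_iff_integrableOn_Ioc_of_le zero_le_one]
    exact (intervalIntegral.intervalIntegrable_rpow' (by norm_num)).const_mul _
  refine Integrable.mono' hdom (measurable_log.pow_const 2).aestronglyMeasurable ?_
  filter_upwards [ae_restrict_mem measurableSet_Ioc] with x hx
  have hbound : (log x * x ^ (1 / 4 : ℝ)) ^ 2 ≤ 4 ^ 2 := by
    refine sq_le_sq.mpr ?_
    simpa using (abs_log_mul_self_rpow_lt x (1 / 4) hx.1 hx.2 (by norm_num)).le
  rw [mul_pow, ← rpow_mul_natCast hx.1.le] at hbound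
  rw [rpow_neg hx.1.le, norm_of_nonneg (sq_nonneg _), ← div_eq_mul_inv,
    le_div_iff₀ (rpow_pos_of_pos hx.1 _)]
  norm_num at hbound ⊢
  exact hbound

theorem sqIntegrable_log_Gamma : SqIntegrable (fun x => log (Gamma x)) := by
  have hcont : ContinuousOn (fun x => log (Gamma (x + 1))) (Icc 0 1) :=
    continuousOn_log_Gamma.comp (by fun_prop) fun x hx => add_pos_of_nonneg_of_pos hx.1 one_pos
  have hsub : SqIntegrable ((fun x => log (Gamma (x + 1))) - log) :=
    (SqIntegrable.of_continuousOn hcont).sub sqIntegrable_log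
  refine hsub.congr_Ioo fun x hx => ?_
  simp only [Pi.sub_apply, log_Gamma_add_one hx.1, add_sub_cancel_right]

theorem sqIntegrable_logPiDivSin : SqIntegrable logPiDivSin :=
  SqIntegrable.congr_Ioo (MemLp.add sqIntegrable_log_Gamma sqIntegrable_log_Gamma.comp_one_sub)
    fun _ hx => log_Gamma_add_log_Gamma_one_sub hx

theorem integral_logPiDivSin : ∫ x in (0 : ℝ)..1, logPiDivSin x = log (2 * π) := by
  have hlogsin : ∫ x in (0 : ℝ)..1, log (sin (π * x)) = -log 2 := by
    rw [intervalIntegral.integral_comp_mul_left (fun x => log (sin x)) pi_ne_zero]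
    simp only [mul_zero, mul_one, integral_log_sin_zero_pi, smul_eq_mul]
    field_simp
  have hlog (x : ℝ) (hx : x ∈ Ioo (0 : ℝ) 1) : logPiDivSin x = log π - log (sin (π * x)) :=
    log_div pi_ne_zero (sin_pi_mul_pos hx).ne'
  have hint : IntervalIntegrable (fun x => log (sin (π * x))) volume 0 1 := by
    simpa [pi_ne_zero] using (intervalIntegrable_log_sin (a := 0) (b := π)).comp_mul_left (c := π)
  rw [intervalIntegral.integral_congr_Ioo_of_le zero_le_one hlog,
    intervalIntegral.integral_sub intervalIntegrable_const hint, hlogsin,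
    log_mul two_ne_zero pi_ne_zero]
  simp
  ring

theorem integral_log_Gamma_mul_of_symm {f : ℝ → ℝ} (hf : SqIntegrable f)
    (hsymm : ∀ x, f (1 - x) = f x) :
    ∫ x in (0 : ℝ)..1, log (Gamma x) * f x = (∫ x in (0 : ℝ)..1, logPiDivSin x * f x) / 2 := by
  rw [integral_eq_half_integral_add_comp_one_sub
    (sqIntegrable_log_Gamma.intervalIntegrable_mul hf)]
  congr 1
  refine intervalIntegral.integral_congr_Ioo_of_le zero_le_one fun x hx => ?_
  simp only [hsymm, ← add_mul, log_Gamma_add_log_Gamma_one_sub hx]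

theorem integral_log_Gamma : ∫ x in (0 : ℝ)..1, log (Gamma x) = log (2 * π) / 2 := by
  simpa [integral_logPiDivSin] using
    integral_log_Gamma_mul_of_symm (SqIntegrable.of_continuousOn (continuousOn_const (c := 1)))
      fun _ => rfl

theorem hasDerivAt_logPiDivSin {x : ℝ} (hx : sin (π * x) ≠ 0) :
    HasDerivAt logPiDivSin (-(π * cos (π * x) / sin (π * x))) x := by
  have hsin : HasDerivAt (fun x => sin (π * x)) (cos (π * x) * (π * 1)) x :=
    ((hasDerivAt_id x).const_mul π).sin
  refine (((hasDerivAt_const x π).div hsin hx).log (div_ne_zero pi_ne_zero hx)).congr_deriv ?_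
  simp only [Pi.div_apply]
  field_simp
  ring

theorem logPiDivSin_mul_sin (x : ℝ) :
    logPiDivSin x * sin (π * x) = π * negMulLog (sin (π * x) / π) := by
  rw [negMulLog, logPiDivSin, ← inv_div, log_inv]
  field_simp

/-- Integration by parts; the factor `sin πx` of `u` cancels the pole of the derivative
`-π cot πx` of `logPiDivSin`. -/
theorem integral_logPiDivSin_mul_deriv {u u' w : ℝ → ℝ} (hu : ∀ x, HasDerivAt u (u' x) x)
    (hu' : Continuous u') (hw : Continuous w) (huw : ∀ x, u x = sin (π * x) * w x) :
    ∫ x in (0 : ℝ)..1, logPiDivSin x * u' x = π * ∫ x in (0 : ℝ)..1, cos (π * x) * w x := by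
  have hcont : Continuous fun x => logPiDivSin x * u x := by
    simp only [huw, ← mul_assoc, logPiDivSin_mul_sin]
    have := continuous_negMulLog
    fun_prop
  have hderiv (x : ℝ) (hx : x ∈ Ioo (0 : ℝ) 1) : HasDerivAt (fun x => logPiDivSin x * u x)
      (logPiDivSin x * u' x - π * (cos (π * x) * w x)) x := by
    have hsin := (sin_pi_mul_pos hx).ne'
    refine ((hasDerivAt_logPiDivSin hsin).mul (hu x)).congr_deriv ?_
    rw [huw]
    field_simp
    ring
  have hL : IntervalIntegrable (fun x => logPiDivSin x * u' x) volume 0 1 :=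
    sqIntegrable_logPiDivSin.intervalIntegrable.mul_continuousOn hu'.continuousOn
  have hcos : IntervalIntegrable (fun x => π * (cos (π * x) * w x)) volume 0 1 :=
    Continuous.intervalIntegrable (by fun_prop) _ _
  have hftc := intervalIntegral.integral_eq_sub_of_hasDerivAt_of_le zero_le_one hcont.continuousOn
    hderiv (hL.sub hcos)
  rw [intervalIntegral.integral_sub hL hcos, intervalIntegral.integral_const_mul] at hftc
  simp only [huw, mul_one, mul_zero, sin_pi, sin_zero, zero_mul] at hftc
  linarith

theorem sin_mul_sum_two_mul_cos (m : ℕ) (θ : ℝ) :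
    sin θ * ∑ j ∈ Finset.range m, 2 * cos ((2 * j + 1) * θ) = sin (2 * m * θ) := by
  induction m with
  | zero => simp
  | succ m ih =>
    rw [Finset.sum_range_succ, mul_add, ih]
    push_cast
    rw [show 2 * ((m : ℝ) + 1) * θ = (2 * m + 1) * θ + θ by ring,
      show 2 * (m : ℝ) * θ = (2 * m + 1) * θ - θ by ring, sin_add, sin_sub]
    ring

theorem sin_mul_sum_two_mul_sin (m : ℕ) (θ : ℝ) :
    sin θ * ∑ j ∈ Finset.range m, 2 * sin ((2 * j + 1) * θ) = 1 - cos (2 * m * θ) := by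
  induction m with
  | zero => simp
  | succ m ih =>
    rw [Finset.sum_range_succ, mul_add, ih]
    push_cast
    rw [show 2 * ((m : ℝ) + 1) * θ = (2 * m + 1) * θ + θ by ring,
      show 2 * (m : ℝ) * θ = (2 * m + 1) * θ - θ by ring, cos_add, cos_sub]
    ring

theorem cos_mul_two_mul_cos (j : ℕ) (x : ℝ) :
    cos (π * x) * (2 * cos ((2 * j + 1) * (π * x))) =
      cos (2 * π * (j + 1 : ℤ) * x) + cos (2 * π * (j : ℤ) * x) := by
  push_cast
  rw [show 2 * π * ((j : ℝ) + 1) * x = (2 * j + 1) * (π * x) + π * x by ring,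
    show 2 * π * (j : ℝ) * x = (2 * j + 1) * (π * x) - π * x by ring, cos_add, cos_sub]
  ring

theorem cos_mul_two_mul_sin (j : ℕ) (x : ℝ) :
    cos (π * x) * (2 * sin ((2 * j + 1) * (π * x))) =
      sin (2 * π * (j + 1 : ℤ) * x) + sin (2 * π * (j : ℤ) * x) := by
  push_cast
  rw [show 2 * π * ((j : ℝ) + 1) * x = (2 * j + 1) * (π * x) + π * x by ring,
    show 2 * π * (j : ℝ) * x = (2 * j + 1) * (π * x) - π * x by ring, sin_add, sin_sub]
  ring

theorem integral_cos_mul_sum_two_mul_cos (n : ℕ) :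
    ∫ x in (0 : ℝ)..1, cos (π * x) *
      ∑ j ∈ Finset.range (n + 1), 2 * cos ((2 * j + 1) * (π * x)) = 1 := by
  have hterm (j : ℕ) : ∫ x in (0 : ℝ)..1, cos (π * x) * (2 * cos ((2 * j + 1) * (π * x))) =
      if j = 0 then 1 else 0 := by
    have hsucc := cosCoeff_one (n := j + 1) (by lia)
    simp_rw [cos_mul_two_mul_cos]
    rw [intervalIntegral.integral_add (Continuous.intervalIntegrable (by fun_prop) _ _)
      (Continuous.intervalIntegrable (by fun_prop) _ _)]
    simp only [cosCoeff, one_mul] at hsucc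
    rw [hsucc, zero_add]
    split_ifs with hj
    · simp [hj]
    · simpa [cosCoeff] using cosCoeff_one (n := j) (by lia)
  simp_rw [Finset.mul_sum]
  rw [intervalIntegral.integral_finsetSum fun j _ =>
    Continuous.intervalIntegrable (by fun_prop) _ _]
  simp [hterm]

theorem integral_cos_mul_sub_half_mul_sum_two_mul_sin (n : ℕ) :
    ∫ x in (0 : ℝ)..1, cos (π * x) * ((x - 1 / 2) *
      ∑ j ∈ Finset.range (n + 1), 2 * sin ((2 * j + 1) * (π * x))) =
      -((harmonic (n + 1) + harmonic n) / (2 * π)) := by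
  have sum_one_div_succ : ∑ j ∈ Finset.range (n + 1), (1 / (j + 1 : ℕ) : ℝ) = harmonic (n + 1) := by
    simp [harmonic]
  have sum_one_div : ∑ j ∈ Finset.range (n + 1), (1 / j : ℝ) = harmonic n := by
    rw [Finset.sum_range_succ']
    simp [harmonic]
  have hterm (j : ℕ) :
      ∫ x in (0 : ℝ)..1, cos (π * x) * ((x - 1 / 2) * (2 * sin ((2 * j + 1) * (π * x)))) =
        -(1 / (2 * π)) * (1 / (j + 1 : ℕ) + 1 / j) := by
    simp_rw [mul_left_comm (cos _) (_ - _), cos_mul_two_mul_sin, mul_add]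
    rw [intervalIntegral.integral_add (Continuous.intervalIntegrable (by fun_prop) _ _)
      (Continuous.intervalIntegrable (by fun_prop) _ _)]
    refine (congrArg₂ (· + ·) (sinCoeff_sub_half (j + 1)) (sinCoeff_sub_half j)).trans ?_
    push_cast
    simp only [one_div, mul_inv]
    ring
  simp_rw [Finset.mul_sum]
  rw [intervalIntegral.integral_finsetSum fun j _ =>
    Continuous.intervalIntegrable (by fun_prop) _ _, Finset.sum_congr rfl fun j _ => hterm j,
    ← Finset.mul_sum, Finset.sum_add_distrib, sum_one_div_succ, sum_one_div]
  ring

theorem cosCoeff_logPiDivSin (n : ℕ) : cosCoeff logPiDivSin (n + 1) = 1 / (2 * (n + 1)) := by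
  have h := integral_logPiDivSin_mul_deriv
    (u := fun x => sin (2 * π * (n + 1) * x))
    (u' := fun x => 2 * π * (n + 1) * cos (2 * π * (n + 1) * x))
    (w := fun x => ∑ j ∈ Finset.range (n + 1), 2 * cos ((2 * j + 1) * (π * x)))
    (fun x => by simpa [mul_comm] using ((hasDerivAt_id x).const_mul (2 * π * (n + 1))).sin)
    (by fun_prop) (by fun_prop) fun x => by
      rw [sin_mul_sum_two_mul_cos]
      push_cast
      ring_nf
  simp_rw [integral_cos_mul_sum_two_mul_cos, mul_left_comm (logPiDivSin _),
    intervalIntegral.integral_const_mul] at h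
  rw [cosCoeff]
  push_cast
  field_simp at h ⊢
  linarith

theorem cosCoeff_log_Gamma (n : ℕ) :
    cosCoeff (fun x => log (Gamma x)) (n + 1) = 1 / (4 * (n + 1)) := by
  rw [cosCoeff, integral_log_Gamma_mul_of_symm (SqIntegrable.of_continuousOn (by fun_prop))
    (cos_two_pi_mul_int_mul_one_sub _)]
  refine (congrArg (· / 2) (cosCoeff_logPiDivSin n)).trans ?_
  field_simp
  norm_num

theorem sinCoeff_sub_half_mul_logPiDivSin (n : ℕ) :
    sinCoeff (fun x => (x - 1 / 2) * logPiDivSin x) (n + 1) =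
      -((log (2 * π) + harmonic n) / (2 * π * (n + 1))) := by
  set ω : ℝ := 2 * π * (n + 1 : ℤ) with hω
  have hderiv (x : ℝ) : HasDerivAt (fun x => (x - 1 / 2) * (1 - cos (ω * x)))
      ((1 - cos (ω * x)) + (x - 1 / 2) * (ω * sin (ω * x))) x := by
    have hcos := ((hasDerivAt_id x).const_mul ω).cos.const_sub 1
    refine (((hasDerivAt_id x).sub_const (1 / 2)).fun_mul hcos).congr_deriv ?_
    simp only [id_eq]
    ring
  have hparts := integral_logPiDivSin_mul_deriv hderiv (by fun_prop)
    (w := fun x => (x - 1 / 2) * ∑ j ∈ Finset.range (n + 1), 2 * sin ((2 * j + 1) * (π * x)))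
    (by fun_prop) fun x => by
      rw [mul_left_comm, sin_mul_sum_two_mul_sin, hω]
      push_cast
      ring_nf
  have hL := sqIntegrable_logPiDivSin.intervalIntegrable
  have hsplit : ∫ x in (0 : ℝ)..1,
      logPiDivSin x * ((1 - cos (ω * x)) + (x - 1 / 2) * (ω * sin (ω * x))) =
        log (2 * π) - 1 / (2 * (n + 1)) +
          ω * sinCoeff (fun x => (x - 1 / 2) * logPiDivSin x) (n + 1) := by
    rw [← integral_logPiDivSin, ← cosCoeff_logPiDivSin, cosCoeff, sinCoeff,
      ← intervalIntegral.integral_const_mul, ← intervalIntegral.integral_sub hL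
        (intervalIntegrable_mul_cos hL _), ← intervalIntegral.integral_add]
    · refine intervalIntegral.integral_congr fun x _ => ?_
      simp only [hω]
      push_cast
      ring
    · exact hL.sub (intervalIntegrable_mul_cos hL _)
    · exact (intervalIntegrable_mul_sin (hL.continuousOn_mul (by fun_prop)) _).const_mul _
  rw [hsplit, integral_cos_mul_sub_half_mul_sum_two_mul_sin, harmonic_succ, mul_neg,
    ← mul_div_assoc, mul_comm π (_ + _), mul_div_mul_right _ _ pi_ne_zero, one_div, mul_inv]
    at hparts
  push_cast at hparts hω
  rw [← hω, ← neg_div, eq_div_iff (by positivity)]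
  linear_combination hparts

end LogGamma

section ExponentialIntegral

theorem integral_log_mul_exp_neg :
    ∫ t in Ioi (0 : ℝ), log t * exp (-t) = -eulerMascheroniConstant := by
  have hderiv : HasDerivAt Complex.Gamma
      (∫ t : ℝ in Ioi 0, (t : ℂ) ^ ((1 : ℂ) - 1) * (log t * exp (-t))) 1 := by
    refine (Complex.hasDerivAt_GammaIntegral (s := 1) (by simp)).congr_of_eventuallyEq ?_
    have hmem : {s : ℂ | 0 < s.re} ∈ 𝓝 (1 : ℂ) :=
      (isOpen_lt continuous_const Complex.continuous_re).mem_nhds (by simp)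
    filter_upwards [hmem] with s hs using Complex.Gamma_eq_integral hs
  have h := hderiv.unique Complex.hasDerivAt_Gamma_one
  simp only [sub_self, Complex.cpow_zero, one_mul, ← Complex.ofReal_mul] at h
  rw [integral_complex_ofReal] at h
  exact_mod_cast h

theorem integrableOn_log_mul_exp_neg : IntegrableOn (fun t => log t * exp (-t)) (Ioi 0) := by
  refine Integrable.of_integral_ne_zero ?_
  rw [integral_log_mul_exp_neg]
  linarith [one_half_lt_eulerMascheroniConstant]

/-- The entire function `(1 - exp (-z)) / z`, encoded as a divided slope so that its value at `0`
is `1`. -/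
noncomputable def einIntegrand : ℂ → ℂ := dslope (fun z => 1 - Complex.exp (-z)) 0

theorem mul_einIntegrand (z : ℂ) : z * einIntegrand z = 1 - Complex.exp (-z) := by
  simpa [einIntegrand] using sub_smul_dslope (fun z => 1 - Complex.exp (-z)) 0 z

theorem differentiable_einIntegrand : Differentiable ℂ einIntegrand := by
  rw [← differentiableOn_univ]
  exact (Complex.differentiableOn_dslope univ_mem).mpr (by fun_prop)

theorem exists_primitive_einIntegrand :
    ∃ P : ℂ → ℂ, P 0 = 0 ∧ ∀ z, HasDerivAt P (einIntegrand z) z := by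
  obtain ⟨P, hzero, hderiv⟩ := differentiable_einIntegrand.isExactOn_univ.with_val_at 0 0
  exact ⟨P, hzero, fun z => hderiv z (mem_univ z)⟩

/-- The entire exponential integral `Ein`, the primitive of `(1 - exp (-z)) / z` vanishing
at `0`. -/
noncomputable def ein : ℂ → ℂ := exists_primitive_einIntegrand.choose

theorem ein_zero : ein 0 = 0 := exists_primitive_einIntegrand.choose_spec.1

theorem hasDerivAt_ein (z : ℂ) : HasDerivAt ein (einIntegrand z) z :=
  exists_primitive_einIntegrand.choose_spec.2 z

theorem continuous_ein : Continuous ein :=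
  continuous_iff_continuousAt.mpr fun z => (hasDerivAt_ein z).continuousAt

theorem integral_log_mul_cexp (c : ℂ) {T : ℝ} (hT : 0 ≤ T) :
    ∫ x in (0 : ℝ)..T, log x * (c * Complex.exp (-(c * x))) =
      (1 - Complex.exp (-(c * T))) * log T - ein (c * T) := by
  have hcont : Continuous fun x : ℝ =>
      (1 - Complex.exp (-(c * x))) * log x - ein (c * x) := by
    have : Continuous fun x : ℝ => ((x * log x : ℝ) : ℂ) :=
      Complex.continuous_ofReal.comp continuous_mul_log
    have := differentiable_einIntegrand.continuous
    have := continuous_ein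
    refine (by fun_prop : Continuous fun x : ℝ =>
      c * einIntegrand (c * x) * ((x * log x : ℝ) : ℂ) - ein (c * x)).congr fun x => ?_
    rw [← mul_einIntegrand]
    push_cast
    ring
  have hderiv (x : ℝ) (hx : x ∈ Ioo 0 T) : HasDerivAt
      (fun x : ℝ => (1 - Complex.exp (-(c * x))) * log x - ein (c * x))
      (log x * (c * Complex.exp (-(c * x)))) x := by
    have hx0 : (x : ℂ) ≠ 0 := Complex.ofReal_ne_zero.mpr hx.1.ne'
    have hlin : HasDerivAt (fun x : ℝ => c * (x : ℂ)) c x := by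
      simpa using (hasDerivAt_id x).ofReal_comp.const_mul c
    refine ((hlin.neg.cexp.const_sub 1).mul (hasDerivAt_log hx.1.ne').ofReal_comp |>.sub
      ((hasDerivAt_ein _).comp x hlin)).congr_deriv ?_
    rw [Pi.neg_apply, ← mul_einIntegrand]
    push_cast
    field_simp
    ring
  have hint : IntervalIntegrable (fun x : ℝ => (log x : ℂ) * (c * Complex.exp (-(c * x))))
      volume 0 T :=
    (intervalIntegrable_ofReal intervalIntegral.intervalIntegrable_log').mul_continuousOn
      (by fun_prop)
  rw [intervalIntegral.integral_eq_sub_of_hasDerivAt_of_le hT hcont.continuousOn hderiv hint]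
  simp [ein_zero]

theorem tendsto_exp_neg_mul_log : Tendsto (fun T : ℝ => exp (-T) * log T) atTop (𝓝 0) := by
  have hlinear : Tendsto (fun T : ℝ => exp (-T) * T) atTop (𝓝 0) := by
    simpa [mul_comm] using tendsto_pow_mul_exp_neg_atTop_nhds_zero 1
  exact ((Asymptotics.isBigO_refl _ _).mul_isLittleO isLittleO_log_id_atTop).trans_tendsto hlinear

theorem tendsto_ein_sub_log :
    Tendsto (fun T : ℝ => ein T - log T) atTop (𝓝 eulerMascheroniConstant) := by
  have hint := intervalIntegral_tendsto_integral_Ioi 0 integrableOn_log_mul_exp_neg tendsto_id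
  rw [integral_log_mul_exp_neg] at hint
  have h := (Complex.continuous_ofReal.tendsto _).comp (hint.add tendsto_exp_neg_mul_log).neg
  rw [add_zero, neg_neg] at h
  refine h.congr' ?_
  filter_upwards [eventually_ge_atTop 0] with T hT
  have hein := integral_log_mul_cexp 1 hT
  simp only [one_mul] at hein
  simp only [Function.comp_apply, id_eq]
  push_cast
  rw [← intervalIntegral.integral_ofReal]
  push_cast
  rw [hein]
  ring

theorem ein_mul_I_sub_ein (T : ℝ) :
    ein (T * Complex.I) - ein T = Complex.I *
      ∫ θ in (0 : ℝ)..π / 2, (1 - Complex.exp (-(T * Complex.exp (θ * Complex.I)))) := by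
  have hderiv (θ : ℝ) : HasDerivAt (fun θ : ℝ => ein (T * Complex.exp (θ * Complex.I)))
      (Complex.I * (1 - Complex.exp (-(T * Complex.exp (θ * Complex.I))))) θ := by
    have harc : HasDerivAt (fun θ : ℝ => T * Complex.exp (θ * Complex.I))
        (T * (Complex.exp (θ * Complex.I) * (1 * Complex.I))) θ :=
      (((hasDerivAt_id θ).ofReal_comp.mul_const Complex.I).cexp).const_mul _
    refine ((hasDerivAt_ein _).comp θ harc).congr_deriv ?_
    rw [← mul_einIntegrand]
    ring
  rw [← intervalIntegral.integral_const_mul,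
    intervalIntegral.integral_eq_sub_of_hasDerivAt (fun θ _ => hderiv θ)
      (Continuous.intervalIntegrable (by fun_prop) _ _)]
  simp [Complex.exp_pi_div_two_mul_I]

theorem norm_cexp_neg_mul_cexp (T θ : ℝ) :
    ‖Complex.exp (-(T * Complex.exp (θ * Complex.I)))‖ = exp (-(cos θ * T)) := by
  rw [Complex.norm_exp, Complex.neg_re, Complex.re_ofReal_mul, Complex.exp_ofReal_mul_I_re,
    mul_comm]

theorem tendsto_integral_cexp_neg_mul_cexp :
    Tendsto (fun T : ℝ => ∫ θ in (0 : ℝ)..π / 2,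
      (1 - Complex.exp (-(T * Complex.exp (θ * Complex.I))))) atTop (𝓝 (π / 2)) := by
  have hbound (T : ℝ) (hT : 0 ≤ T) (θ : ℝ) (hθ : θ ∈ uIoc 0 (π / 2)) :
      ‖1 - Complex.exp (-(T * Complex.exp (θ * Complex.I)))‖ ≤ 2 := by
    rw [uIoc_of_le (by positivity)] at hθ
    have hcos : 0 ≤ cos θ := cos_nonneg_of_mem_Icc ⟨by linarith [hθ.1, pi_pos], hθ.2⟩
    have hexp : exp (-(cos θ * T)) ≤ 1 := exp_le_one_iff.mpr (by simpa using mul_nonneg hcos hT)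
    refine (norm_sub_le _ _).trans ?_
    rw [norm_cexp_neg_mul_cexp, norm_one]
    linarith
  have hlim (θ : ℝ) (hθ : θ ∈ Ioo 0 (π / 2)) :
      Tendsto (fun T : ℝ => 1 - Complex.exp (-(T * Complex.exp (θ * Complex.I)))) atTop (𝓝 1) := by
    have hcos : 0 < cos θ := cos_pos_of_mem_Ioo ⟨by linarith [hθ.1, pi_pos], hθ.2⟩
    have hexp : Tendsto (fun T => exp (-(cos θ * T))) atTop (𝓝 0) :=
      tendsto_exp_neg_atTop_nhds_zero.comp (tendsto_id.const_mul_atTop hcos)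
    have hzero : Tendsto (fun T : ℝ => Complex.exp (-(T * Complex.exp (θ * Complex.I)))) atTop
        (𝓝 0) := by
      rw [tendsto_zero_iff_norm_tendsto_zero]
      simpa only [norm_cexp_neg_mul_cexp] using hexp
    simpa using hzero.const_sub 1
  have hone : ∫ _ in (0 : ℝ)..π / 2, (1 : ℂ) = π / 2 := by simp
  rw [← hone]
  refine intervalIntegral.tendsto_integral_filter_of_dominated_convergence (fun _ => 2)
    (.of_forall fun T => Continuous.aestronglyMeasurable (by fun_prop)) ?_
    intervalIntegrable_const ?_
  · filter_upwards [eventually_ge_atTop 0] with T hT using .of_forall (hbound T hT)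
  · have hne : ∀ᵐ θ : ℝ, θ ≠ π / 2 := by simp [ae_iff]
    filter_upwards [hne] with θ hne hθ
    rw [uIoc_of_le (by positivity)] at hθ
    exact hlim θ ⟨hθ.1, hθ.2.lt_of_ne hne⟩

theorem tendsto_ein_mul_I_sub_log :
    Tendsto (fun T : ℝ => ein (T * Complex.I) - log T) atTop
      (𝓝 (eulerMascheroniConstant + π / 2 * Complex.I)) := by
  refine (tendsto_ein_sub_log.add
    (tendsto_integral_cexp_neg_mul_cexp.mul_const Complex.I)).congr fun T => ?_
  rw [mul_comm _ Complex.I, ← ein_mul_I_sub_ein]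
  ring

theorem mul_integral_log_mul_sin (ω : ℝ) {T : ℝ} (hT : 0 ≤ T) :
    ω * ∫ x in (0 : ℝ)..T, log x * sin (ω * x) =
      (1 - cos (ω * T)) * log T - (ein ((ω * T : ℝ) * Complex.I)).re := by
  have hexp (x : ℝ) : Complex.exp (-(ω * Complex.I * x)) =
      cos (ω * x) - sin (ω * x) * Complex.I := by
    rw [show -((ω : ℂ) * Complex.I * x) = (-(ω * x) : ℝ) * Complex.I by push_cast; ring,
      Complex.exp_mul_I, ← Complex.ofReal_cos, ← Complex.ofReal_sin, cos_neg, sin_neg]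
    push_cast
    ring
  have hint : IntervalIntegrable
      (fun x : ℝ => log x * (ω * Complex.I * Complex.exp (-(ω * Complex.I * x)))) volume 0 T :=
    (intervalIntegrable_ofReal intervalIntegral.intervalIntegrable_log').mul_continuousOn
      (by fun_prop)
  have hre (x : ℝ) : (log x * (ω * Complex.I * Complex.exp (-(ω * Complex.I * x)))).re =
      ω * (log x * sin (ω * x)) := by
    rw [hexp, Complex.re_ofReal_mul, mul_assoc, Complex.re_ofReal_mul, Complex.I_mul_re,
      Complex.sub_im, Complex.mul_I_im, Complex.ofReal_im, Complex.ofReal_re]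
    ring
  have h := congrArg Complex.re (integral_log_mul_cexp (ω * Complex.I) hT)
  rw [← Complex.reCLM_apply, ← Complex.reCLM.intervalIntegral_comp_comm hint, hexp] at h
  simp only [Complex.reCLM_apply, hre, intervalIntegral.integral_const_mul, Complex.sub_re,
    Complex.re_mul_ofReal, Complex.one_re, Complex.ofReal_re, Complex.mul_I_re, Complex.ofReal_im,
    neg_zero, sub_zero] at h
  rw [h]
  push_cast
  ring_nf

end ExponentialIntegral

section Kummer

theorem sinCoeff_add_mul (a b : ℝ) (n : ℤ) :
    sinCoeff (fun x => a + x * b) n = -(b / (2 * π * n)) := by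
  have hconst : ∫ x in (0 : ℝ)..1, sin (2 * π * n * x) = 0 := by
    simpa [sinCoeff] using sinCoeff_eq_zero_of_symm (f := fun _ => 1) (fun _ => rfl) n
  have hlin := sinCoeff_sub_half n
  have hsplit (x : ℝ) : (a + x * b) * sin (2 * π * n * x) =
      (a + b / 2) * sin (2 * π * n * x) + b * ((x - 1 / 2) * sin (2 * π * n * x)) := by
    ring
  rw [sinCoeff] at hlin ⊢
  simp_rw [hsplit]
  rw [intervalIntegral.integral_add (Continuous.intervalIntegrable (by fun_prop) _ _)
      (Continuous.intervalIntegrable (by fun_prop) _ _), intervalIntegral.integral_const_mul,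
    intervalIntegral.integral_const_mul, hconst, hlin]
  ring

theorem sinCoeff_sum_log_add (N : ℕ) (m : ℤ) :
    sinCoeff (fun x => ∑ k ∈ Finset.range N, log (x + k)) m =
      ∫ x in (0 : ℝ)..N, log x * sin (2 * π * m * x) := by
  have hint (a b : ℝ) : IntervalIntegrable (fun x => log x * sin (2 * π * m * x)) volume a b :=
    intervalIntegral.intervalIntegrable_log'.mul_continuousOn (by fun_prop)
  have hperiodic (k : ℕ) : (fun x => log (x + k) * sin (2 * π * m * x)) =
      fun x => log (x + k) * sin (2 * π * m * (x + k)) := by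
    funext x
    rw [← sin_add_int_mul_two_pi (2 * π * m * x) (m * k)]
    push_cast
    ring_nf
  have hshift (k : ℕ) : ∫ x in (0 : ℝ)..1, log (x + k) * sin (2 * π * m * x) =
      ∫ x in (k : ℝ)..(k + 1 : ℕ), log x * sin (2 * π * m * x) := by
    rw [hperiodic, intervalIntegral.integral_comp_add_right fun x => log x * sin (2 * π * m * x)]
    simp [add_comm]
  simp_rw [sinCoeff, Finset.sum_mul]
  rw [intervalIntegral.integral_finsetSum, Finset.sum_congr rfl fun k _ => hshift k,
    intervalIntegral.sum_integral_adjacent_intervals (fun k _ => hint _ _), Nat.cast_zero]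
  intro k _
  rw [hperiodic]
  simpa using (hint k (1 + k)).comp_add_right (k : ℝ)

theorem mul_sinCoeff_sum_log_add (N : ℕ) (m : ℤ) :
    2 * π * m * sinCoeff (fun x => ∑ k ∈ Finset.range N, log (x + k)) m =
      -(ein ((2 * π * m * N : ℝ) * Complex.I)).re := by
  have hcos : cos (2 * π * m * N) = 1 := by
    rw [← cos_int_mul_two_pi (m * N)]
    push_cast
    ring_nf
  rw [sinCoeff_sum_log_add, mul_integral_log_mul_sin _ N.cast_nonneg, hcos]
  ring

/-- The error of the approximation of `log Γ` on `[N, N + 1]` by the affine function with value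
`log Γ(N)` and slope `log N` at `N`. -/
noncomputable def logGammaError (N : ℕ) (x : ℝ) : ℝ :=
  log (Gamma (N + x)) - (log (Gamma N) + x * log N)

theorem abs_logGammaError_le {N : ℕ} (hN : 2 ≤ N) {x : ℝ} (hx : x ∈ Ioc (0 : ℝ) 1) :
    |logGammaError N x| ≤ log N - log (N - 1) := by
  have hupper : log (Gamma (N + x)) ≤ log (Gamma N) + x * log N :=
    BohrMollerup.f_add_nat_le convexOn_log_Gamma log_Gamma_add_one (by lia) hx.1 hx.2
  have hlower : log (Gamma N) + x * log (N - 1) ≤ log (Gamma (N + x)) :=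
    BohrMollerup.f_add_nat_ge convexOn_log_Gamma log_Gamma_add_one hN hx.1
  have hN' : (2 : ℝ) ≤ N := by exact_mod_cast hN
  have hmono : log (N - 1) ≤ log N := log_le_log (by linarith) (by linarith)
  rw [logGammaError, abs_le]
  constructor
  · nlinarith [hx.2]
  · linarith

theorem continuousOn_logGammaError {N : ℕ} (hN : N ≠ 0) :
    ContinuousOn (logGammaError N) (Icc 0 1) :=
  (continuousOn_log_Gamma.comp (by fun_prop) fun _ hx =>
    add_pos_of_pos_of_nonneg (by positivity) hx.1).sub (by fun_prop)

theorem log_Gamma_add_sum_log_add (N : ℕ) {x : ℝ} (hx : 0 < x) :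
    log (Gamma x) + ∑ k ∈ Finset.range N, log (x + k) =
      logGammaError N x + (log (Gamma N) + x * log N) := by
  have hfeq : log (Gamma (x + N)) = log (Gamma x) + ∑ k ∈ Finset.range N, log (x + k) :=
    BohrMollerup.f_add_nat_eq (f := log ∘ Gamma) log_Gamma_add_one hx N
  rw [← hfeq, logGammaError, sub_add_cancel, add_comm x]

theorem tendsto_sinCoeff_logGammaError (m : ℤ) :
    Tendsto (fun N => sinCoeff (logGammaError N) m) atTop (𝓝 0) := by
  have hlog : Tendsto (fun N : ℕ => log N - log ((N : ℝ) - 1)) atTop (𝓝 0) := by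
    refine (tendsto_log_nat_add_one_sub_log.comp (tendsto_sub_atTop_nat 1)).congr' ?_
    filter_upwards [eventually_ge_atTop 1] with N hN
    simp [Nat.cast_sub hN]
  refine squeeze_zero_norm' ?_ hlog
  filter_upwards [eventually_ge_atTop 2] with N hN
  exact abs_sinCoeff_le (fun x hx => abs_logGammaError_le hN hx) m

theorem sinCoeff_log_Gamma_eq_sinCoeff_logGammaError_add {m : ℤ} (hm : m ≠ 0) {N : ℕ}
    (hN : N ≠ 0) :
    sinCoeff (fun x => log (Gamma x)) m = sinCoeff (logGammaError N) m +
      ((ein ((2 * π * m * N : ℝ) * Complex.I)).re - log N) / (2 * π * m) := by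
  have hlog : IntervalIntegrable (fun x => ∑ k ∈ Finset.range N, log (x + k)) volume 0 1 := by
    rw [← Finset.sum_fn]
    refine IntervalIntegrable.sum _ fun k _ => ?_
    simpa using (intervalIntegral.intervalIntegrable_log' (a := k) (b := 1 + k)).comp_add_right
      (k : ℝ)
  have h : sinCoeff ((fun x => log (Gamma x)) + fun x => ∑ k ∈ Finset.range N, log (x + k)) m =
      sinCoeff (logGammaError N + fun x => log (Gamma N) + x * log N) m :=
    sinCoeff_congr_Ioo (fun x hx => log_Gamma_add_sum_log_add N hx.1) m
  rw [sinCoeff_add sqIntegrable_log_Gamma.intervalIntegrable hlog, sinCoeff_add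
    (SqIntegrable.of_continuousOn (continuousOn_logGammaError hN)).intervalIntegrable
    (Continuous.intervalIntegrable (by fun_prop) _ _), sinCoeff_add_mul] at h
  have hsum := mul_sinCoeff_sum_log_add N m
  have hm' : (m : ℝ) ≠ 0 := by exact_mod_cast hm
  field_simp at h ⊢
  linear_combination h - hsum

theorem sinCoeff_log_Gamma {m : ℤ} (hm : 0 < m) :
    sinCoeff (fun x => log (Gamma x)) m =
      (eulerMascheroniConstant + log (2 * π) + log m) / (2 * π * m) := by
  have hm' : (0 : ℝ) < m := by exact_mod_cast hm
  have hscale : Tendsto (fun N : ℕ => 2 * π * m * (N : ℝ)) atTop atTop :=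
    tendsto_natCast_atTop_atTop.const_mul_atTop (by positivity)
  have hein : Tendsto (fun N : ℕ => (ein ((2 * π * m * N : ℝ) * Complex.I)).re -
      log (2 * π * m * N)) atTop (𝓝 eulerMascheroniConstant) := by
    have := (Complex.continuous_re.tendsto _).comp (tendsto_ein_mul_I_sub_log.comp hscale)
    simpa [Function.comp_def] using this
  have hlim := (tendsto_sinCoeff_logGammaError m).add
    ((hein.add_const (log (2 * π * m))).div_const (2 * π * m))
  rw [zero_add, log_mul (by positivity) hm'.ne', ← add_assoc] at hlim
  refine tendsto_nhds_unique (tendsto_const_nhds.congr' ?_) hlim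
  filter_upwards [eventually_ge_atTop 1] with N hN
  have hN' : (N : ℝ) ≠ 0 := by positivity
  rw [sinCoeff_log_Gamma_eq_sinCoeff_logGammaError_add hm.ne' (by lia : N ≠ 0),
    log_mul (by positivity) hN', log_mul (by positivity) hm'.ne']
  ring

end Kummer

section Zeta

theorem logMul_iterate_one_apply (j n : ℕ) : (LSeries.logMul^[j] 1) n = Complex.log n ^ j := by
  induction j with
  | zero => simp
  | succ j ih => rw [Function.iterate_succ_apply', LSeries.logMul, ih, pow_succ']

theorem LSeriesHasSum_logMul_iterate_one (j : ℕ) {s : ℂ} (hs : 1 < s.re) :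
    LSeriesHasSum (LSeries.logMul^[j] 1) s ((-1) ^ j * iteratedDeriv j riemannZeta s) := by
  have habs : LSeries.abscissaOfAbsConv 1 < (s.re : EReal) := by
    rw [LSeries.abscissaOfAbsConv_one]
    exact_mod_cast hs
  have hzeta : riemannZeta =ᶠ[𝓝 s] LSeries 1 := by
    filter_upwards [(isOpen_lt continuous_const Complex.continuous_re).mem_nhds hs] with z hz
    exact (LSeries_one_eq_riemannZeta hz).symm
  have hsummable : LSeriesSummable (LSeries.logMul^[j] 1) s :=
    LSeriesSummable_of_abscissaOfAbsConv_lt_re (by rwa [LSeries.absicssaOfAbsConv_logPowMul])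
  convert! hsummable.LSeriesHasSum using 1
  rw [hzeta.iteratedDeriv_eq, LSeries_iteratedDeriv j habs, ← mul_assoc, ← mul_pow]
  simp

theorem hasSum_log_pow_div_pow (j : ℕ) {k : ℕ} (hk : 1 < k) :
    HasSum (fun n : ℕ => log (n + 1) ^ j / ((n : ℝ) + 1) ^ k)
      ((-1) ^ j * (iteratedDeriv j riemannZeta k).re) := by
  have hL := LSeriesHasSum_logMul_iterate_one j (s := k) (by simpa using hk)
  rw [LSeriesHasSum, ← hasSum_nat_add_iff' 1] at hL
  convert! Complex.hasSum_re hL using 1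
  · funext n
    rw [LSeries.term_of_ne_zero n.succ_ne_zero, logMul_iterate_one_apply, Complex.cpow_natCast,
      ← Complex.natCast_log]
    norm_cast
  · rw [← Complex.re_ofReal_mul]
    simp

theorem deriv_riemannZeta_one_sub {s : ℂ} (hs : ∀ n : ℕ, s ≠ -n) (hs' : s ≠ 1) :
    deriv riemannZeta (1 - s) = 2 * (2 * π) ^ (-s) *
      ((Complex.log (2 * π) * Complex.Gamma s - deriv Complex.Gamma s) *
          Complex.cos (π * s / 2) * riemannZeta s +
        Complex.Gamma s * (π / 2 * Complex.sin (π * s / 2)) * riemannZeta s -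
        Complex.Gamma s * Complex.cos (π * s / 2) * deriv riemannZeta s) := by
  have hleft : HasDerivAt (fun z => riemannZeta (1 - z)) (-deriv riemannZeta (1 - s)) s := by
    have hs0 : 1 - s ≠ 1 := by simpa using hs 0
    exact (differentiableAt_riemannZeta hs0).hasDerivAt.comp_const_sub 1 s
  have hpow : HasDerivAt (fun z : ℂ => (2 * π : ℂ) ^ (-z))
      ((2 * π) ^ (-s) * Complex.log (2 * π) * -1) s :=
    (hasDerivAt_neg s).const_cpow (Or.inl (by simp [pi_ne_zero]))
  have hcos : HasDerivAt (fun z : ℂ => Complex.cos (π * z / 2))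
      (-Complex.sin (π * s / 2) * (π * 1 / 2)) s :=
    (((hasDerivAt_id s).const_mul (π : ℂ)).div_const 2).ccos
  have hright := (((hpow.const_mul 2).mul (Complex.differentiableAt_Gamma s hs).hasDerivAt).mul
    hcos).mul (differentiableAt_riemannZeta hs').hasDerivAt
  have hpoles : ∀ᶠ z : ℂ in 𝓝 s, ∀ n : ℕ, z ≠ -n := by
    have hGamma : (Complex.Gamma s)⁻¹ ≠ 0 := inv_ne_zero (Complex.Gamma_ne_zero hs)
    filter_upwards [Complex.differentiable_one_div_Gamma.continuous.continuousAt.eventually_ne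
      hGamma] with z hz n hzn
    exact hz (inv_eq_zero.mpr ((Complex.Gamma_eq_zero_iff z).mpr ⟨n, hzn⟩))
  have hfeq : (fun z => riemannZeta (1 - z)) =ᶠ[𝓝 s] fun z =>
      2 * (2 * π : ℂ) ^ (-z) * Complex.Gamma z * Complex.cos (π * z / 2) * riemannZeta z := by
    filter_upwards [hpoles, eventually_ne_nhds hs'] with z hz hz'
    exact riemannZeta_one_sub hz hz'
  have h := hleft.unique (hright.congr_of_eventuallyEq hfeq)
  simp only [Pi.mul_apply] at h
  linear_combination -h

theorem deriv_riemannZeta_two :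
    deriv riemannZeta 2 = 2 * π ^ 2 * deriv riemannZeta (-1) -
      π ^ 2 / 6 * (1 - eulerMascheroniConstant - Complex.log (2 * π)) := by
  have hGamma : deriv Complex.Gamma 2 = 1 - eulerMascheroniConstant := by
    have h := Complex.deriv_Gamma_nat 1
    norm_num at h
    rw [h]
    ring
  have hpow : (2 * π : ℂ) ^ (-2 : ℂ) = 1 / (4 * π ^ 2) := by
    rw [Complex.cpow_neg, Complex.cpow_ofNat]
    ring
  have hpole (n : ℕ) : (2 : ℂ) ≠ -n := fun h => by
    have : (2 + n : ℂ) = 0 := by rw [h, neg_add_cancel]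
    norm_cast at this
    lia
  have h := deriv_riemannZeta_one_sub hpole (by norm_num)
  have hpi : (π : ℂ) ≠ 0 := by exact_mod_cast pi_ne_zero
  rw [show (1 - 2 : ℂ) = -1 by norm_num, hpow, hGamma, riemannZeta_two,
    mul_div_cancel_right₀ _ two_ne_zero, Complex.Gamma_ofNat_eq_factorial, Complex.cos_pi,
    Complex.sin_pi, Nat.factorial_one, Nat.cast_one] at h
  rw [h]
  field_simp
  ring

theorem re_deriv_riemannZeta_two :
    (deriv riemannZeta 2).re = 2 * π ^ 2 * (deriv riemannZeta (-1)).re -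
      π ^ 2 / 6 * (1 - eulerMascheroniConstant - log (2 * π)) := by
  have h : deriv riemannZeta 2 = ((2 * π ^ 2 : ℝ) : ℂ) * deriv riemannZeta (-1) -
      ((π ^ 2 / 6 * (1 - eulerMascheroniConstant - log (2 * π)) : ℝ) : ℂ) := by
    rw [deriv_riemannZeta_two]
    push_cast [Complex.ofReal_log (by positivity : 0 ≤ 2 * π)]
    ring
  rw [h, Complex.sub_re, Complex.re_ofReal_mul, Complex.ofReal_re]

end Zeta

section Series

theorem sub_half_mul_logPiDivSin_one_sub (x : ℝ) :
    (1 - x - 1 / 2) * logPiDivSin (1 - x) = -((x - 1 / 2) * logPiDivSin x) := by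
  rw [logPiDivSin_one_sub]
  ring

theorem integral_sub_half_mul_logPiDivSin : ∫ x in (0 : ℝ)..1, (x - 1 / 2) * logPiDivSin x = 0 :=
  integral_eq_zero_of_antisymm sub_half_mul_logPiDivSin_one_sub

theorem cosCoeff_sub_half_mul_logPiDivSin (n : ℤ) :
    cosCoeff (fun x => (x - 1 / 2) * logPiDivSin x) n = 0 :=
  cosCoeff_eq_zero_of_antisymm sub_half_mul_logPiDivSin_one_sub n

theorem sqIntegrable_sub_half_mul_logPiDivSin :
    SqIntegrable (fun x => (x - 1 / 2) * logPiDivSin x) :=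
  SqIntegrable.continuousOn_mul (by fun_prop) sqIntegrable_logPiDivSin

theorem sqIntegrable_bernoulliFun (k : ℕ) : SqIntegrable (bernoulliFun k) :=
  .of_continuousOn (continuous_bernoulliFun k).continuousOn

theorem integral_sub_half_mul_sub_half_mul_logPiDivSin :
    ∫ x in (0 : ℝ)..1, (x - 1 / 2) * ((x - 1 / 2) * logPiDivSin x) =
      (∫ x in (0 : ℝ)..1, bernoulliFun 2 x * logPiDivSin x) + log (2 * π) / 12 := by
  have hsq (x : ℝ) : (x - 1 / 2) * ((x - 1 / 2) * logPiDivSin x) =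
      bernoulliFun 2 x * logPiDivSin x + logPiDivSin x / 12 := by
    rw [bernoulliFun_two]
    ring
  simp_rw [hsq]
  rw [intervalIntegral.integral_add
      ((sqIntegrable_bernoulliFun 2).intervalIntegrable_mul sqIntegrable_logPiDivSin)
      (sqIntegrable_logPiDivSin.intervalIntegrable.div_const 12),
    intervalIntegral.integral_div, integral_logPiDivSin]

theorem hasSum_one_div_succ_sq : HasSum (fun n : ℕ => 1 / ((n : ℝ) + 1) ^ 2) (π ^ 2 / 6) := by
  simpa using (hasSum_nat_add_iff' 1).mpr hasSum_zeta_two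

theorem hasSum_one_div_succ_cube :
    HasSum (fun n : ℕ => 1 / ((n : ℝ) + 1) ^ 3)
      (2 * π ^ 2 * ∫ x in (0 : ℝ)..1, bernoulliFun 2 x * logPiDivSin x) := by
  have h := hasSum_cosCoeff_mul_add_sinCoeff_mul (sqIntegrable_bernoulliFun 2)
    sqIntegrable_logPiDivSin
  rw [integral_bernoulliFun_eq_zero two_ne_zero, zero_mul, sub_zero] at h
  convert! h.mul_left (2 * π ^ 2) using 1
  funext n
  rw [cosCoeff_bernoulliFun_two, cosCoeff_logPiDivSin, sinCoeff_eq_zero_of_symm logPiDivSin_one_sub]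
  push_cast
  field_simp
  ring

theorem hasSum_log_two_pi_add_harmonic_div_succ_sq :
    HasSum (fun n : ℕ => (log (2 * π) + harmonic n) / ((n : ℝ) + 1) ^ 2)
      (2 * π ^ 2 * ∫ x in (0 : ℝ)..1, (x - 1 / 2) * ((x - 1 / 2) * logPiDivSin x)) := by
  have hlin : SqIntegrable (fun x => x - 1 / 2) := .of_continuousOn (by fun_prop)
  have h := hasSum_cosCoeff_mul_add_sinCoeff_mul hlin sqIntegrable_sub_half_mul_logPiDivSin
  rw [integral_eq_zero_of_antisymm (f := fun x => x - 1 / 2) fun x => by ring, zero_mul,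
    sub_zero] at h
  convert! h.mul_left (2 * π ^ 2) using 1
  funext n
  rw [sinCoeff_sub_half, sinCoeff_sub_half_mul_logPiDivSin,
    cosCoeff_sub_half_mul_logPiDivSin]
  push_cast
  field_simp
  ring

-- Parseval evaluates `∫₀¹ (x - 1/2)² log (π / sin πx) dx` in two ways, according to whether the
-- logarithm is multiplied by one factor `x - 1/2` or by none.
theorem hasSum_harmonic_div_succ_sq :
    HasSum (fun n : ℕ => (harmonic n : ℝ) / ((n : ℝ) + 1) ^ 2) (riemannZeta 3).re := by
  have hzeta := hasSum_log_pow_div_pow 0 (k := 3) (by norm_num)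
  simp only [iteratedDeriv_zero, pow_zero, one_mul, Nat.cast_ofNat] at hzeta
  have hlog := hasSum_log_two_pi_add_harmonic_div_succ_sq
  rw [integral_sub_half_mul_sub_half_mul_logPiDivSin, mul_add,
    hasSum_one_div_succ_cube.unique hzeta] at hlog
  convert! hlog.sub (hasSum_one_div_succ_sq.mul_left (log (2 * π))) using 1
  · funext n
    ring
  · ring

theorem hasSum_log_Gamma_sq :
    HasSum (fun n : ℕ => (π ^ 2 / 4 + (eulerMascheroniConstant + log (2 * π) + log (n + 1)) ^ 2) /
        ((n : ℝ) + 1) ^ 2)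
      (2 * π ^ 2 * ((∫ x in (0 : ℝ)..1, log (Gamma x) ^ 2) - (log (2 * π) / 2) ^ 2)) := by
  have h := hasSum_cosCoeff_sq_add_sinCoeff_sq sqIntegrable_log_Gamma
  rw [integral_log_Gamma] at h
  convert! h.mul_left (2 * π ^ 2) using 1
  funext n
  rw [cosCoeff_log_Gamma, sinCoeff_log_Gamma (by positivity)]
  push_cast
  field_simp
  ring

theorem two_pi_sq_mul_integral_log_Gamma_sq :
    2 * π ^ 2 * ∫ x in (0 : ℝ)..1, log (Gamma x) ^ 2 =
      π ^ 2 / 2 * log (2 * π) ^ 2 +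
        (π ^ 2 / 4 + (eulerMascheroniConstant + log (2 * π)) ^ 2) * (π ^ 2 / 6) -
        2 * (eulerMascheroniConstant + log (2 * π)) * (deriv riemannZeta 2).re +
        (iteratedDeriv 2 riemannZeta 2).re := by
  have hlog := hasSum_log_pow_div_pow 1 one_lt_two
  have hlogsq := hasSum_log_pow_div_pow 2 one_lt_two
  have h := ((hasSum_one_div_succ_sq.mul_left
    (π ^ 2 / 4 + (eulerMascheroniConstant + log (2 * π)) ^ 2)).add
    (hlog.mul_left (2 * (eulerMascheroniConstant + log (2 * π))))).add hlogsq
  have hterms := h.unique (by convert! hasSum_log_Gamma_sq using 2; ring)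
  simp only [iteratedDeriv_one, Nat.cast_ofNat] at hterms
  linear_combination -hterms

theorem hasSum_sub_half_mul_logPiDivSin_mul_log_Gamma :
    HasSum (fun n : ℕ => (log (2 * π) + harmonic n) *
        (eulerMascheroniConstant + log (2 * π) + log (n + 1)) / ((n : ℝ) + 1) ^ 2)
      (-(2 * π ^ 2 * ∫ x in (0 : ℝ)..1, (x - 1 / 2) * logPiDivSin x * log (Gamma x))) := by
  have h := hasSum_cosCoeff_mul_add_sinCoeff_mul sqIntegrable_sub_half_mul_logPiDivSin
    sqIntegrable_log_Gamma
  rw [integral_sub_half_mul_logPiDivSin, zero_mul, sub_zero] at h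
  convert! h.mul_left (-(2 * π ^ 2)) using 1
  · funext n
    rw [sinCoeff_sub_half_mul_logPiDivSin, sinCoeff_log_Gamma (by positivity),
      cosCoeff_sub_half_mul_logPiDivSin]
    push_cast
    field_simp
    ring
  · ring

-- Under `x ↦ 1 - x` both integrands symmetrize to `(x - 1/2) (log² Γ(x) - log² Γ(1 - x))`.
theorem integral_sub_half_mul_log_Gamma_sq :
    ∫ x in (0 : ℝ)..1, (x - 1 / 2) * log (Gamma x) ^ 2 =
      ∫ x in (0 : ℝ)..1, (x - 1 / 2) * logPiDivSin x * log (Gamma x) := by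
  have hlin : SqIntegrable (fun x => (x - 1 / 2) * log (Gamma x)) :=
    SqIntegrable.continuousOn_mul (by fun_prop) sqIntegrable_log_Gamma
  have hsq : IntervalIntegrable (fun x => (x - 1 / 2) * log (Gamma x) ^ 2) volume 0 1 := by
    simpa only [sq, mul_assoc] using hlin.intervalIntegrable_mul sqIntegrable_log_Gamma
  rw [integral_eq_half_integral_add_comp_one_sub hsq, integral_eq_half_integral_add_comp_one_sub
    (sqIntegrable_sub_half_mul_logPiDivSin.intervalIntegrable_mul sqIntegrable_log_Gamma)]
  congr 1
  refine intervalIntegral.integral_congr_Ioo_of_le zero_le_one fun x hx => ?_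
  simp only [logPiDivSin_one_sub]
  rw [← log_Gamma_add_log_Gamma_one_sub hx]
  ring

theorem integral_mul_log_Gamma_sq :
    ∫ x in (0 : ℝ)..1, x * log (Gamma x) ^ 2 =
      (∫ x in (0 : ℝ)..1, (x - 1 / 2) * logPiDivSin x * log (Gamma x)) +
        (∫ x in (0 : ℝ)..1, log (Gamma x) ^ 2) / 2 := by
  have hsq := sqIntegrable_log_Gamma.intervalIntegrable_sq
  have hsub (x : ℝ) :
      (x - 1 / 2) * log (Gamma x) ^ 2 = x * log (Gamma x) ^ 2 - log (Gamma x) ^ 2 / 2 := by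
    ring
  rw [← integral_sub_half_mul_log_Gamma_sq, ← intervalIntegral.integral_div]
  simp_rw [hsub]
  rw [intervalIntegral.integral_sub (hsq.continuousOn_mul (by fun_prop)) (hsq.div_const 2),
    sub_add_cancel]

theorem hasSum_harmonic_succ_mul_log_div_succ_sq :
    HasSum (fun n : ℕ => harmonic (n + 1) * log (n + 1) / ((n : ℝ) + 1) ^ 2)
      (-(2 * π ^ 2 * ∫ x in (0 : ℝ)..1, (x - 1 / 2) * logPiDivSin x * log (Gamma x)) -
        (eulerMascheroniConstant + log (2 * π)) *
          (log (2 * π) * (π ^ 2 / 6) + (riemannZeta 3).re) +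
        log (2 * π) * (deriv riemannZeta 2).re - (deriv riemannZeta 3).re) := by
  have hlog_sq := hasSum_log_pow_div_pow 1 one_lt_two
  have hlog_cube := hasSum_log_pow_div_pow 1 (k := 3) (by norm_num)
  simp only [iteratedDeriv_one, Nat.cast_ofNat] at hlog_sq hlog_cube
  convert! ((hasSum_sub_half_mul_logPiDivSin_mul_log_Gamma.sub
    (((hasSum_one_div_succ_sq.mul_left (log (2 * π))).add hasSum_harmonic_div_succ_sq).mul_left
      (eulerMascheroniConstant + log (2 * π)))).sub
    (hlog_sq.mul_left (log (2 * π)))).add hlog_cube using 1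
  · funext n
    rw [harmonic_succ]
    push_cast
    field_simp
    ring
  · ring

theorem log_exp_sq_div_rpow (a : ℝ) :
    log (exp a ^ 2 / (2 * π) ^ ((1 : ℝ) / 6)) = 2 * a - log (2 * π) / 6 := by
  rw [log_div (by positivity) (by positivity), log_pow, log_exp, log_rpow (by positivity)]
  push_cast
  ring

end Series

end

/-- The series `∑_{n=2}^∞ (H_n·log n)/n²` converges and equals
`(π²/6)·(π²/8 − γ²/2 + log²(2π)) + π²·γ·log(A²/(2π)^{1/6}) − C·ζ(3) − ζ′(3)
  + (1/2)·ζ″(2) − 2π²·∫₀¹ x·log²Γ(x) dx`,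
where `H_n` is the n-th harmonic number, `A = exp(1/12 − ζ′(−1))` is the
Glaisher–Kinkelin constant, `C = log(2π) + γ`, and `ζ″(2)` is the second
derivative of the Riemann zeta function at `2`. -/
theorem hasSum_harmonic_mul_log_div_sq :
    HasSum (fun n : ℕ => (harmonic (n + 2) : ℝ) * Real.log (n + 2) / ((n : ℝ) + 2) ^ 2)
      ((π ^ 2 / 6) * (π ^ 2 / 8 - Real.eulerMascheroniConstant ^ 2 / 2
          + Real.log (2 * π) ^ 2)
        + π ^ 2 * Real.eulerMascheroniConstant *
            Real.log ((Real.exp (1 / 12 - (deriv riemannZeta (-1)).re)) ^ 2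
              / (2 * π) ^ ((1 : ℝ) / 6))
        - (Real.log (2 * π) + Real.eulerMascheroniConstant) * (riemannZeta 3).re
        - (deriv riemannZeta 3).re
        + (1 / 2) * (iteratedDeriv 2 riemannZeta 2).re
        - 2 * π ^ 2 * ∫ x in (0:ℝ)..1, x * Real.log (Real.Gamma x) ^ 2) := by
  have hseries := (hasSum_nat_add_iff' 1).mpr hasSum_harmonic_succ_mul_log_div_succ_sq
  convert! hseries using 1
  · funext n
    push_cast
    rw [show (n : ℝ) + 1 + 1 = n + 2 by ring]
  · have hsq := two_pi_sq_mul_integral_log_Gamma_sq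
    rw [re_deriv_riemannZeta_two] at hsq ⊢
    rw [log_exp_sq_div_rpow, integral_mul_log_Gamma_sq]
    simp only [Finset.range_one, Finset.sum_singleton, CharP.cast_eq_zero, zero_add, log_one,
      mul_zero, zero_div, sub_zero]
    linear_combination (-1 / 2) * hsq
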